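/- For every γ with 0 < γ ≤ 10^{−6}/3 there exists n_0 such that the following holds for all n ≥ n_0. Let H be a 3-graph on n vertices with δ(H) ≥ 0.8·C(n−1,2), and let R ⊆ V(H) satisfy: (a) γ²n/4 ≤ |R| ≤ γ²n/2; (b1) for every pair {u,v} ∈ G_{1/3} there are at least 0.333·|R| vertices w ∈ R with {u,v,w} ∈ H; (b2) for every vertex v there are at least 0.697·|R| vertices w ∈ R with {v,w} ∈ G_{1/3}; (c) the subhypergraph H[R] induced on R satisfies δ(H[R]) ≥ 0.7994·C(|R|,2). Let m ≤ γ³n + 1 be an integer and let e_1, …, e_m and f_1, …, f_m be pairwise disjoint ordered pairs of vertices of V(H) \ R whose underlying unordered pairs belong to G_{1/3}. Then there exist pairwise vertex-disjoint tight paths Π_1, …, Π_m in H, each of length 16, such that for i = 1, …, m the path Π_i has endpairs e_i and f_i and V(Π_i) \ (e_i ∪ f_i) ⊆ R. -/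

import Mathlib

open Finset
open scoped Classical

/-- The co-degree of a pair of vertices in a 3-graph `H`. -/
def coDeg {V : Type} [DecidableEq V] (H : Finset (Finset V)) (u v : V) : ℕ :=
  (H.filter fun e => u ∈ e ∧ v ∈ e).card

/-- A tight path in a 3-graph `H`: a sequence of distinct vertices in which every three
consecutive vertices form an edge of `H`. -/
def IsTightPath {V : Type} [DecidableEq V] {t : ℕ} (H : Finset (Finset V))
    (w : Fin t → V) : Prop :=
  Function.Injective w ∧
    ∀ (i : ℕ) (hi : i + 2 < t),
      ({w ⟨i, by omega⟩, w ⟨i + 1, by omega⟩, w ⟨i + 2, by omega⟩} : Finset V) ∈ H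

/-!
A large pair `{a, b}` is joined to a large pair `{c, d}` through `R` by a tight path
`a b x₁ p q x₂ u v y₁ s t y₂ d c`. In the dense link graph of each `x` extending `a b`, the
vertices of high degree span many edges `p q` with the neighbours of the pair `b x`; averaging
over `x` fixes one pair `p q` that serves a positive proportion `X` of all `x`, and symmetrically a
pair `s t` serving a set `Y`. For `x ∈ X` and `y ∈ Y`, the two neighbourhoods of size `0.64 |R|`
span more pairs `u v` than the links of `x` and `y` together miss, since
`0.64 ^ 2 > 2 * (1 - 0.7994)`. Averaging over `X ×ˢ Y` fixes a pair `u v` that serves many `x` and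
many `y`, so that `x₁, x₂` and `y₁, y₂` can be chosen distinct. Prepending single vertices
extends the path to any length, and since all connections together use only a small part of `R`,
they can be chosen greedily.
-/

section Counting

variable {ι κ α : Type*}

lemma exists_mul_card_le_card_filter {s : Finset ι} {t : Finset κ} {P : ι → κ → Prop}
    [∀ i j, Decidable (P i j)] {c M : ℝ} (hc : 0 < c) (hM : 0 < M) (hs : s.Nonempty)
    (ht : #t ≤ M) (h : ∀ i ∈ s, c * M ≤ #{j ∈ t | P i j}) :
    ∃ j ∈ t, c * #s ≤ #{i ∈ s | P i j} := by
  by_contra! hlt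
  have ht_nonempty : t.Nonempty := by
    obtain ⟨i, hi⟩ := hs
    have hpos : (0 : ℝ) < #{j ∈ t | P i j} := (mul_pos hc hM).trans_le (h i hi)
    exact (card_pos.1 (mod_cast hpos)).mono (filter_subset _ _)
  have hcount : #s • (c * M) < #t • (c * #s) :=
    card_nsmul_lt_card_nsmul_of_le_of_lt P ht_nonempty h hlt
  have hbound : #t * (c * #s) ≤ M * (c * #s) := by gcongr
  simp only [nsmul_eq_mul] at hcount
  linarith

lemma exists_pair_mul_card_le_card_filter {s : Finset ι} {S R : Finset α}
    {P : ι → α → α → Prop} [∀ i, DecidableRel (P i)] {c : ℝ} (hc : 0 < c) (hs : s.Nonempty)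
    (hR : R.Nonempty) (hSR : S ⊆ R) (h : ∀ i ∈ s, c * (#R : ℝ) ^ 2 ≤ #(Rel.interedges (P i) S S)) :
    ∃ p ∈ S, ∃ q ∈ S, c * #s ≤ #{i ∈ s | P i p q} := by
  have hsquare : (#(S ×ˢ S) : ℝ) ≤ (#R : ℝ) ^ 2 := by
    rw [card_product, sq]
    exact_mod_cast Nat.mul_le_mul (card_le_card hSR) (card_le_card hSR)
  obtain ⟨⟨p, q⟩, hpq, hcard⟩ := exists_mul_card_le_card_filter
    (P := fun i (z : α × α) => P i z.1 z.2) hc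
    (sq_pos_of_pos (Nat.cast_pos.2 hR.card_pos)) hs hsquare h
  obtain ⟨hp, hq⟩ := mem_product.1 hpq
  exact ⟨p, hp, q, hq, hcard⟩

lemma card_filter_le_card_filter_sdiff_add_card [DecidableEq α] (S F : Finset α) (P : α → Prop)
    [DecidablePred P] : (#{x ∈ S | P x} : ℝ) ≤ #{x ∈ S \ F | P x} + #F := by
  have hsub : {x ∈ S | P x} ⊆ {x ∈ S \ F | P x} ∪ F := by grind
  exact mod_cast (card_le_card hsub).trans (card_union_le _ _)

lemma card_filter_add_card_filter_le (S : Finset α) (P Q : α → Prop) [DecidablePred P]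
    [DecidablePred Q] : (#{x ∈ S | P x} + #{x ∈ S | Q x} : ℝ) ≤ #{x ∈ S | P x ∧ Q x} + #S := by
  have hsub : {x ∈ S | P x} ∪ {x ∈ S | Q x} ⊆ S :=
    union_subset (filter_subset _ _) (filter_subset _ _)
  have hcard := card_inter_add_card_union {x ∈ S | P x} {x ∈ S | Q x}
  rw [← filter_and] at hcard
  exact mod_cast hcard.ge.trans (by gcongr)

lemma exists_ne_of_length_add_one_lt_card {S : Finset α} (l : List α) (h : l.length + 1 < #S) :
    ∃ x ∈ S, ∃ y ∈ S, x ∉ l ∧ y ∉ l ∧ x ≠ y := by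
  have hcard : 1 < #(S \ l.toFinset) := by
    have := card_le_card_sdiff_add_card (s := S) (t := l.toFinset)
    have := l.toFinset_card_le
    lia
  obtain ⟨x, hx, y, hy, hxy⟩ := one_lt_card.1 hcard
  simp only [mem_sdiff, List.mem_toFinset] at hx hy
  exact ⟨x, hx.1, y, hy.1, hx.2, hy.2, hxy⟩

lemma exists_pairwise_disjoint_of_forall_exists_avoiding [Fintype ι] {N : ℕ}
    {P : ι → List α → Prop}
    (h : ∀ i (F : Finset α), #F ≤ N * Fintype.card ι →
      ∃ l, P i l ∧ l.length ≤ N ∧ ∀ x ∈ l, x ∉ F) :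
    ∃ w : ι → List α, (∀ i, P i (w i)) ∧ Pairwise fun i j => (w i).Disjoint (w j) := by
  suffices hs : ∀ s : Finset ι, ∃ w : ι → List α,
      (∀ i ∈ s, P i (w i) ∧ (w i).length ≤ N) ∧
      (s : Set ι).Pairwise fun i j => (w i).Disjoint (w j) by
    obtain ⟨w, hw, hdisj⟩ := hs univ
    exact ⟨w, fun i => (hw i (mem_univ i)).1, by simpa [Set.pairwise_univ] using hdisj⟩
  intro s
  induction s using Finset.induction_on with
  | empty => exact ⟨fun _ => [], by simp, by simp⟩
  | insert i s hi ih =>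
    obtain ⟨w, hw, hdisj⟩ := ih
    have hused : #(s.biUnion fun j => (w j).toFinset) ≤ N * Fintype.card ι := calc
      _ ≤ #s * N := card_biUnion_le_card_mul _ _ _ fun j hj =>
        (List.toFinset_card_le _).trans (hw j hj).2
      _ ≤ N * Fintype.card ι := by
        rw [mul_comm]
        gcongr
        exact card_le_univ s
    obtain ⟨l, hPl, hlen, havoid⟩ := h i _ hused
    have hl : ∀ j ∈ s, l.Disjoint (w j) := fun j hj x hxl hxw =>
      havoid x hxl (mem_biUnion.2 ⟨j, hj, List.mem_toFinset.2 hxw⟩)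
    have hne : ∀ j ∈ s, j ≠ i := fun j hj hji => hi (hji ▸ hj)
    refine ⟨Function.update w i l, ?_, ?_⟩
    · intro j hj
      obtain rfl | hj := mem_insert.1 hj
      · simpa using ⟨hPl, hlen⟩
      · simpa [hne j hj] using hw j hj
    · rw [coe_insert, Set.pairwise_insert_of_notMem (mod_cast hi)]
      refine ⟨fun j hj k hk hjk => ?_, fun j hj => ?_⟩
      · simpa [hne j hj, hne k hk] using hdisj hj hk hjk
      · simpa [hne j hj] using ⟨hl j hj, (hl j hj).symm⟩

end Counting

section DenseRelations

variable {α : Type*} {r : α → α → Prop} [DecidableRel r]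

lemma card_interedges_eq_sum_card_filter (S T : Finset α) :
    #(Rel.interedges r S T) = ∑ p ∈ S, #{q ∈ T | r p q} := by
  simp only [Rel.interedges, card_filter, sum_product]

/-- The elements of `R` related to at least `θ` elements of `R`. -/
noncomputable def highDegree (r : α → α → Prop) [DecidableRel r] (R : Finset α) (θ : ℝ) :
    Finset α :=
  {p ∈ R | θ ≤ #{q ∈ R | r p q}}

lemma card_interedges_le_add_card_highDegree (R : Finset α) (θ : ℝ) :
    (#(Rel.interedges r R R) : ℝ) ≤ θ * #R + (#R - θ) * #(highDegree r R θ) := by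
  have hdeg (p : α) : (#{q ∈ R | r p q} : ℝ) ≤
      θ + (#R - θ) * if θ ≤ (#{q ∈ R | r p q} : ℝ) then 1 else 0 := by
    have hle : (#{q ∈ R | r p q} : ℝ) ≤ #R := mod_cast card_filter_le R _
    split_ifs <;> linarith
  calc (#(Rel.interedges r R R) : ℝ) = ∑ p ∈ R, (#{q ∈ R | r p q} : ℝ) := by
        exact_mod_cast card_interedges_eq_sum_card_filter R R
    _ ≤ ∑ p ∈ R, (θ + (#R - θ) * if θ ≤ (#{q ∈ R | r p q} : ℝ) then 1 else 0) :=
        sum_le_sum fun p _ => hdeg p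
    _ = θ * #R + (#R - θ) * #(highDegree r R θ) := by
        simp only [highDegree, sum_add_distrib, sum_const, nsmul_eq_mul, ← mul_sum, sum_boole,
          mul_comm]

lemma card_highDegree_ge {R : Finset α} (hR : R.Nonempty)
    (hnon : #(Rel.interedges (fun p q => ¬ r p q) R R) ≤ 0.2007 * (#R : ℝ) ^ 2) :
    0.4425 * (#R : ℝ) ≤ #(highDegree r R (0.64 * #R)) := by
  have hpos : (0 : ℝ) < #R := mod_cast hR.card_pos
  have hcompl : (#(Rel.interedges r R R) + #(Rel.interedges (fun p q => ¬ r p q) R R) : ℝ)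
      = #R * #R := mod_cast Rel.card_interedges_add_card_interedges_compl r R R
  have hdeg := card_interedges_le_add_card_highDegree (r := r) R (0.64 * #R)
  refine le_of_mul_le_mul_right ?_ hpos
  nlinarith

lemma card_inter_mul_le_card_interedges [DecidableEq α] {R A D : Finset α} {θ : ℝ}
    (hD : D ⊆ highDegree r R θ) :
    #(A ∩ D) * (θ + #D - #R) ≤ (#(Rel.interedges r A D) : ℝ) := by
  have hDR : D ⊆ R := hD.trans (filter_subset _ _)
  have hdeg : ∀ p ∈ A ∩ D, θ + #D - #R ≤ (#{q ∈ D | r p q} : ℝ) := by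
    intro p hp
    have hθ := (mem_filter.1 (hD (mem_inter.1 hp).2)).2
    have hloss := card_filter_le_card_filter_sdiff_add_card R (R \ D) (r p)
    rw [Finset.sdiff_sdiff_eq_self hDR, cast_card_sdiff hDR] at hloss
    linarith
  calc #(A ∩ D) * (θ + #D - #R) ≤ ∑ p ∈ A ∩ D, (#{q ∈ D | r p q} : ℝ) := by
        simpa only [nsmul_eq_mul] using card_nsmul_le_sum _ _ _ hdeg
    _ = #(Rel.interedges r (A ∩ D) D) := by
        exact_mod_cast (card_interedges_eq_sum_card_filter _ _).symm
    _ ≤ #(Rel.interedges r A D) := by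
        exact_mod_cast card_le_card (Rel.interedges_mono inter_subset_left subset_rfl)

-- Count `A ×ˢ D ∪ D ×ˢ A`, whose two parts overlap in the square of `A ∩ D`.
lemma two_mul_card_mul_card_le [DecidableEq α] [Std.Symm r] {R A D : Finset α} (hA : A ⊆ R)
    (hD : D ⊆ R) :
    2 * (#A * #D) ≤ 2 * #(Rel.interedges r A D) + #(A ∩ D) ^ 2
      + #(Rel.interedges (fun p q => ¬ r p q) R R) := by
  have hcover : A ×ˢ D ∪ D ×ˢ A ⊆ Rel.interedges r A D ∪ Rel.interedges r D A ∪
      Rel.interedges (fun p q => ¬ r p q) R R := by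
    rintro ⟨p, q⟩ hpq
    simp only [mem_union, mem_product, Rel.mk_mem_interedges_iff] at hpq ⊢
    grind
  have hunion : #(A ×ˢ D ∪ D ×ˢ A) ≤ 2 * #(Rel.interedges r A D) +
      #(Rel.interedges (fun p q => ¬ r p q) R R) := calc
    _ ≤ #(Rel.interedges r A D) + #(Rel.interedges r D A) +
        #(Rel.interedges (fun p q => ¬ r p q) R R) :=
      (card_le_card hcover).trans ((card_union_le _ _).trans (by gcongr; exact card_union_le _ _))
    _ = _ := by rw [Rel.card_interedges_comm D A, two_mul]
  have hinter := card_inter_add_card_union (A ×ˢ D) (D ×ˢ A)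
  rw [product_inter_product, inter_comm D A] at hinter
  simp only [card_product] at hinter
  lia

lemma card_mul_card_le_card_interedges_and_add (r' : α → α → Prop) [DecidableRel r']
    {R B B' : Finset α} (hB : B ⊆ R) (hB' : B' ⊆ R) :
    #B * #B' ≤ #(Rel.interedges (fun p q => r p q ∧ r' p q) B B')
      + #(Rel.interedges (fun p q => ¬ r p q) R R)
      + #(Rel.interedges (fun p q => ¬ r' p q) R R) := by
  have hcover : B ×ˢ B' ⊆ Rel.interedges (fun p q => r p q ∧ r' p q) B B' ∪
      Rel.interedges (fun p q => ¬ r p q) R R ∪ Rel.interedges (fun p q => ¬ r' p q) R R := by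
    rintro ⟨p, q⟩ hpq
    simp only [mem_union, mem_product, Rel.mk_mem_interedges_iff] at hpq ⊢
    grind
  rw [← card_product]
  exact (card_le_card hcover).trans ((card_union_le _ _).trans (by gcongr; exact card_union_le _ _))

lemma card_interedges_highDegree_sdiff_ge [DecidableEq α] [Std.Symm r] {R F A : Finset α}
    (hR : R.Nonempty)
    (hnon : #(Rel.interedges (fun p q => ¬ r p q) R R) ≤ 0.2007 * (#R : ℝ) ^ 2)
    (hF : #F ≤ 0.0001 * (#R : ℝ)) (hAR : A ⊆ R) (hA : 0.3329 * (#R : ℝ) ≤ #A) :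
    0.004 * (#R : ℝ) ^ 2 ≤ #(Rel.interedges r A (highDegree r R (0.64 * #R) \ F)) := by
  set D := highDegree r R (0.64 * #R) \ F with hD
  have hDhigh : D ⊆ highDegree r R (0.64 * #R) := sdiff_subset
  have hDcard : 0.4424 * (#R : ℝ) ≤ #D := by
    have hloss : (#(highDegree r R (0.64 * #R)) : ℝ) ≤ #D + #F :=
      mod_cast card_le_card_sdiff_add_card
    linarith [card_highDegree_ge hR hnon]
  have hinter : #(A ∩ D) * (0.0824 * #R) ≤ (#(Rel.interedges r A D) : ℝ) :=
    le_trans (by gcongr; linarith) (card_inter_mul_le_card_interedges hDhigh)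
  obtain hlarge | hsmall := le_total (0.29 * (#R : ℝ)) #(A ∩ D)
  · nlinarith
  · have hsq : (#(A ∩ D) : ℝ) ^ 2 ≤ (0.29 * #R) ^ 2 := by gcongr
    have hprod : 0.3329 * (#R : ℝ) * (0.4424 * #R) ≤ #A * #D := by gcongr
    have hcount : (2 * (#A * #D) : ℝ) ≤ 2 * #(Rel.interedges r A D) + #(A ∩ D) ^ 2
        + #(Rel.interedges (fun p q => ¬ r p q) R R) :=
      mod_cast two_mul_card_mul_card_le hAR (hDhigh.trans (filter_subset _ _))
    linarith

lemma card_interedges_and_ge {r' : α → α → Prop} [DecidableRel r'] {R B B' : Finset α}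
    (hnon : #(Rel.interedges (fun p q => ¬ r p q) R R) ≤ 0.2007 * (#R : ℝ) ^ 2)
    (hnon' : #(Rel.interedges (fun p q => ¬ r' p q) R R) ≤ 0.2007 * (#R : ℝ) ^ 2)
    (hBR : B ⊆ R) (hBR' : B' ⊆ R)
    (hB : 0.6399 * (#R : ℝ) ≤ #B) (hB' : 0.6399 * (#R : ℝ) ≤ #B') :
    0.006 * (#R : ℝ) ^ 2 ≤ #(Rel.interedges (fun p q => r p q ∧ r' p q) B B') := by
  have hprod : 0.6399 * (#R : ℝ) * (0.6399 * #R) ≤ #B * #B' := by gcongr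
  have hcount : (#B * #B' : ℝ) ≤ #(Rel.interedges (fun p q => r p q ∧ r' p q) B B')
      + #(Rel.interedges (fun p q => ¬ r p q) R R)
      + #(Rel.interedges (fun p q => ¬ r' p q) R R) :=
    mod_cast card_mul_card_le_card_interedges_and_add r' hBR hBR'
  nlinarith

end DenseRelations

section TightChains

variable {V : Type*} [DecidableEq V] {H : Finset (Finset V)} {x y z : V}

/-- `{x, y, z}` is an edge of the 3-graph `H`; the link of a vertex `x` is the relation
`IsEdge H x`. -/
abbrev IsEdge (H : Finset (Finset V)) (x y z : V) : Prop := ({x, y, z} : Finset V) ∈ H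

lemma IsEdge.swap_left (h : IsEdge H x y z) : IsEdge H y x z := by
  rwa [IsEdge, insert_comm]

lemma IsEdge.swap_right (h : IsEdge H x y z) : IsEdge H x z y := by
  rwa [IsEdge, pair_comm]

lemma IsEdge.rotate (h : IsEdge H x y z) : IsEdge H y z x := h.swap_left.swap_right

lemma IsEdge.reverse (h : IsEdge H x y z) : IsEdge H z y x := h.rotate.swap_left

lemma IsEdge.ne_right (hH : ∀ e ∈ H, #e = 3) (h : IsEdge H x y z) : y ≠ z := by
  rintro rfl
  have hcard := hH _ h
  rw [pair_eq_singleton] at hcard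
  have := card_le_two (a := x) (b := y)
  lia

instance (x : V) : Std.Symm (IsEdge H x) := ⟨fun _ _ => IsEdge.swap_right⟩

lemma card_filter_mem_mul_two_le_card_interedges (hH : ∀ e ∈ H, #e = 3) {R : Finset V} :
    #{e ∈ {e ∈ H | e ⊆ R} | x ∈ e} * 2 ≤ #(Rel.interedges (IsEdge H x) R R) := by
  rw [← mul_one #(Rel.interedges (IsEdge H x) R R)]
  refine card_mul_le_card_mul (fun e z => ({x, z.1, z.2} : Finset V) = e) (fun e he => ?_)
    fun z _ => card_le_one.2 (by grind [mem_bipartiteBelow])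
  simp only [mem_filter] at he
  obtain ⟨⟨heH, heR⟩, hxe⟩ := he
  have htwo : #(e.erase x) = 2 := by rw [card_erase_of_mem hxe, hH e heH]
  obtain ⟨p, q, hpq, herase⟩ := card_eq_two.1 htwo
  obtain rfl : ({x, p, q} : Finset V) = e := by rw [← herase, insert_erase hxe]
  have hpair : {(p, q), (q, p)} ⊆
      (Rel.interedges (IsEdge H x) R R).bipartiteAbove
        (fun e z => ({x, z.1, z.2} : Finset V) = e) {x, p, q} := by
    have hpR : p ∈ R := heR (by simp)
    have hqR : q ∈ R := heR (by simp)
    intro w hw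
    obtain rfl | rfl : w = (p, q) ∨ w = (q, p) := by simpa using hw
    · simpa [Rel.mk_mem_interedges_iff, hpR, hqR] using heH
    · simpa [Rel.mk_mem_interedges_iff, hpR, hqR, pair_comm q p] using IsEdge.swap_right heH
  simpa [card_pair, hpq] using card_le_card hpair

/-- Every three consecutive entries of the list form an edge of `H`: a tight walk, with no
distinctness required. -/
def TightChain (H : Finset (Finset V)) : List V → Prop
  | x :: y :: z :: l => IsEdge H x y z ∧ TightChain H (y :: z :: l)
  | _ => True

lemma TightChain.isEdge_getElem : ∀ {l : List V}, TightChain H l →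
    ∀ (i : ℕ) (hi : i + 2 < l.length), IsEdge H l[i] l[i + 1] l[i + 2]
  | _ :: _ :: _ :: _, h, 0, _ => h.1
  | _ :: y :: z :: l, h, i + 1, hi =>
    isEdge_getElem (l := y :: z :: l) h.2 i (by simpa using hi)

end TightChains

section Reservoir

variable {V : Type*} [DecidableEq V]

/-- Properties (b1), (b2) and (c) of a reservoir set `R`, with respect to an arbitrary relation `L`
in place of the graph `G_{1/3}` of large pairs. -/
structure IsReservoir (H : Finset (Finset V)) (L : V → V → Prop) (R : Finset V) : Prop where
  codegree : ∀ u v, L u v → 0.333 * (#R : ℝ) ≤ #{w ∈ R | IsEdge H u v w}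
  large : ∀ v, 0.697 * (#R : ℝ) ≤ #{w ∈ R | L v w}
  degree : ∀ v ∈ R, 0.7994 * ((#R).choose 2 : ℝ) ≤ #{e ∈ {e ∈ H | e ⊆ R} | v ∈ e}

/-- The vertices `x ∈ S` for which `a b x p q` is a tight walk and the pair `{x, q}` has
codegree at least `0.64 |R|` into `R`. -/
noncomputable def anchors (H : Finset (Finset V)) (R S : Finset V) (a b p q : V) : Finset V :=
  {x ∈ S | TightChain H [a, b, x, p, q] ∧ q ∈ highDegree (IsEdge H x) R (0.64 * #R)}

lemma mem_anchors_iff {H : Finset (Finset V)} {R S : Finset V} {a b p q x : V} :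
    x ∈ anchors H R S a b p q ↔ x ∈ S ∧ (IsEdge H a b x ∧ IsEdge H b x p ∧ IsEdge H x p q) ∧
      q ∈ highDegree (IsEdge H x) R (0.64 * #R) := by
  simp only [anchors, TightChain, mem_filter, and_true]

namespace IsReservoir

variable {H : Finset (Finset V)} {L : V → V → Prop} {R F : Finset V} {a b c d x : V}

lemma card_extensions_ge (hR : IsReservoir H L R) (hF : #F ≤ 0.0001 * (#R : ℝ)) (hab : L a b) :
    0.0299 * (#R : ℝ) ≤ #{x ∈ R \ F | IsEdge H a b x ∧ L b x} := by
  have hboth := card_filter_add_card_filter_le R (IsEdge H a b) (L b)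
  have hloss := card_filter_le_card_filter_sdiff_add_card R F fun x => IsEdge H a b x ∧ L b x
  linarith [hR.codegree a b hab, hR.large b]

lemma card_nonedges_link_le (hR : IsReservoir H L R) (hH : ∀ e ∈ H, #e = 3)
    (hRcard : 10 ^ 4 ≤ #R) (hx : x ∈ R) :
    #(Rel.interedges (fun p q => ¬ IsEdge H x p q) R R) ≤ 0.2007 * (#R : ℝ) ^ 2 := by
  have hdeg := hR.degree x hx
  rw [Nat.cast_choose_two] at hdeg
  have hlink : (#{e ∈ {e ∈ H | e ⊆ R} | x ∈ e} * 2 : ℝ) ≤ #(Rel.interedges (IsEdge H x) R R) :=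
    mod_cast card_filter_mem_mul_two_le_card_interedges hH
  have hcompl : (#(Rel.interedges (IsEdge H x) R R)
      + #(Rel.interedges (fun p q => ¬ IsEdge H x p q) R R) : ℝ) = #R * #R :=
    mod_cast Rel.card_interedges_add_card_interedges_compl (IsEdge H x) R R
  have hlarge : (10 ^ 4 : ℝ) ≤ #R := mod_cast hRcard
  nlinarith

lemma card_anchoring_pairs_ge (hR : IsReservoir H L R) (hH : ∀ e ∈ H, #e = 3)
    (hRcard : 10 ^ 4 ≤ #R) (hF : #F ≤ 0.0001 * (#R : ℝ)) (hx : x ∈ R) (hbx : L b x) :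
    0.004 * (#R : ℝ) ^ 2 ≤ #(Rel.interedges (fun p q => IsEdge H b x p ∧ IsEdge H x p q ∧
      q ∈ highDegree (IsEdge H x) R (0.64 * #R)) (R \ F) (R \ F)) := by
  have hA : 0.3329 * (#R : ℝ) ≤ #{p ∈ R \ F | IsEdge H b x p} := by
    linarith [hR.codegree b x hbx,
      card_filter_le_card_filter_sdiff_add_card R F (IsEdge H b x)]
  refine (card_interedges_highDegree_sdiff_ge ⟨x, hx⟩ (hR.card_nonedges_link_le hH hRcard hx) hF
    ((filter_subset _ _).trans sdiff_subset) hA).trans ?_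
  gcongr
  intro z hz
  simp only [Rel.mem_interedges_iff, highDegree, mem_filter, mem_sdiff] at hz ⊢
  tauto

lemma exists_anchors (hR : IsReservoir H L R) (hH : ∀ e ∈ H, #e = 3) (hRcard : 10 ^ 4 ≤ #R)
    (hF : #F ≤ 0.0001 * (#R : ℝ)) (hab : L a b) :
    ∃ p ∈ R \ F, ∃ q ∈ R \ F, 0.0001 * (#R : ℝ) ≤ #(anchors H R (R \ F) a b p q) := by
  have hRpos : (0 : ℝ) < #R := Nat.cast_pos.2 (by lia)
  have hext := hR.card_extensions_ge hF hab
  obtain ⟨p, hp, q, hq, hcard⟩ := exists_pair_mul_card_le_card_filter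
    (s := {x ∈ R \ F | IsEdge H a b x ∧ L b x}) (S := R \ F) (R := R)
    (P := fun x p q => IsEdge H b x p ∧ IsEdge H x p q ∧
      q ∈ highDegree (IsEdge H x) R (0.64 * #R)) (c := 0.004) (by norm_num)
    (card_pos.1 (Nat.cast_pos (α := ℝ).1 (by linarith))) (card_pos.1 (by lia)) sdiff_subset
    fun x hx => by
      simp only [mem_filter, mem_sdiff] at hx
      exact hR.card_anchoring_pairs_ge hH hRcard hF hx.1.1 hx.2.2
  refine ⟨p, hp, q, hq, ?_⟩
  calc 0.0001 * (#R : ℝ) ≤ 0.004 * #{x ∈ R \ F | IsEdge H a b x ∧ L b x} := by linarith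
    _ ≤ _ := hcard
    _ ≤ #(anchors H R (R \ F) a b p q) := by
      gcongr
      intro x hx
      simp only [mem_anchors_iff, mem_filter] at hx ⊢
      tauto

lemma card_bridging_pairs_ge (hR : IsReservoir H L R) (hH : ∀ e ∈ H, #e = 3)
    (hRcard : 10 ^ 4 ≤ #R) (hF : #F ≤ 0.0001 * (#R : ℝ)) {x y q s : V} (hx : x ∈ R) (hy : y ∈ R)
    (hq : q ∈ highDegree (IsEdge H x) R (0.64 * #R))
    (hs : s ∈ highDegree (IsEdge H y) R (0.64 * #R)) :
    0.006 * (#R : ℝ) ^ 2 ≤ #(Rel.interedges (fun u v => (IsEdge H x q u ∧ IsEdge H x u v) ∧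
      (IsEdge H y s v ∧ IsEdge H y u v)) (R \ F) (R \ F)) := by
  have hnbhd {x q : V} (hq : q ∈ highDegree (IsEdge H x) R (0.64 * #R)) :
      0.6399 * (#R : ℝ) ≤ #{w ∈ R \ F | IsEdge H x q w} := by
    linarith [(mem_filter.1 hq).2, card_filter_le_card_filter_sdiff_add_card R F (IsEdge H x q)]
  refine (card_interedges_and_ge (hR.card_nonedges_link_le hH hRcard hx)
    (hR.card_nonedges_link_le hH hRcard hy) ((filter_subset _ _).trans sdiff_subset)
    ((filter_subset _ _).trans sdiff_subset) (hnbhd hq) (hnbhd hs)).trans ?_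
  gcongr
  intro z hz
  simp only [Rel.mem_interedges_iff, mem_filter] at hz ⊢
  tauto

lemma exists_bridge (hR : IsReservoir H L R) (hH : ∀ e ∈ H, #e = 3) (hRcard : 10 ^ 4 ≤ #R)
    (hF : #F ≤ 0.0001 * (#R : ℝ)) {X Y : Finset V} {q s : V} (hX : X.Nonempty) (hY : Y.Nonempty)
    (hXR : X ⊆ R) (hYR : Y ⊆ R) (hq : ∀ x ∈ X, q ∈ highDegree (IsEdge H x) R (0.64 * #R))
    (hs : ∀ y ∈ Y, s ∈ highDegree (IsEdge H y) R (0.64 * #R)) :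
    ∃ u ∈ R \ F, ∃ v ∈ R \ F,
      0.006 * (#X : ℝ) ≤ #{x ∈ X | IsEdge H x q u ∧ IsEdge H x u v} ∧
      0.006 * (#Y : ℝ) ≤ #{y ∈ Y | IsEdge H y s v ∧ IsEdge H y u v} := by
  obtain ⟨u, hu, v, hv, hcard⟩ := exists_pair_mul_card_le_card_filter (s := X ×ˢ Y)
    (S := R \ F) (R := R)
    (P := fun w u v => (IsEdge H w.1 q u ∧ IsEdge H w.1 u v) ∧
      (IsEdge H w.2 s v ∧ IsEdge H w.2 u v)) (c := 0.006) (by norm_num)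
    (hX.product hY) (card_pos.1 (by lia)) sdiff_subset fun w hw => by
      obtain ⟨hwX, hwY⟩ := mem_product.1 hw
      exact hR.card_bridging_pairs_ge hH hRcard hF (hXR hwX) (hYR hwY) (hq _ hwX) (hs _ hwY)
  rw [filter_product (fun x => IsEdge H x q u ∧ IsEdge H x u v)
    (fun y => IsEdge H y s v ∧ IsEdge H y u v), card_product, card_product] at hcard
  push_cast at hcard
  refine ⟨u, hu, v, hv, ?_, ?_⟩
  · refine le_of_mul_le_mul_right ?_ (Nat.cast_pos (α := ℝ).2 hY.card_pos)
    rw [mul_assoc]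
    exact hcard.trans (by gcongr; exact filter_subset _ _)
  · refine le_of_mul_le_mul_left ?_ (Nat.cast_pos (α := ℝ).2 hX.card_pos)
    rw [mul_left_comm]
    exact hcard.trans (by gcongr; exact filter_subset _ _)

lemma exists_anchored_bridge (hR : IsReservoir H L R) (hH : ∀ e ∈ H, #e = 3)
    (hRcard : 10 ^ 8 ≤ #R) (hF : (#F : ℝ) + 4 ≤ 0.0001 * #R) (hab : L a b) (hcd : L c d) :
    ∃ p q u v s t, [p, q, u, v, s, t].Nodup ∧ (∀ z ∈ [p, q, u, v, s, t], z ∈ R \ F) ∧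
      10 ≤ #{x ∈ R \ F | TightChain H [a, b, x, p, q] ∧ TightChain H [p, q, x, u, v]} ∧
      10 ≤ #{y ∈ R \ F | TightChain H [u, v, y, s, t] ∧ TightChain H [s, t, y, d, c]} := by
  have hRcard' : 10 ^ 4 ≤ #R := by lia
  have hRlarge : (10 ^ 8 : ℝ) ≤ #R := mod_cast hRcard
  have hunion (S : Finset V) (hS : #S ≤ 4) : #(F ∪ S) ≤ 0.0001 * (#R : ℝ) :=
    le_trans (mod_cast (card_union_le F S).trans (by gcongr)) hF
  obtain ⟨p, hp, q, hq, hX⟩ := hR.exists_anchors (F := F) hH hRcard' (by linarith) hab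
  obtain ⟨t, ht, s, hs, hY⟩ :=
    hR.exists_anchors hH hRcard' (hunion {p, q} (card_le_two.trans (by lia))) hcd
  obtain ⟨u, hu, v, hv, hXuv, hYuv⟩ := hR.exists_bridge hH hRcard'
    (hunion {p, q, s, t} card_le_four)
    (card_pos.1 (Nat.cast_pos (α := ℝ).1 (hX.trans_lt' (by linarith))))
    (card_pos.1 (Nat.cast_pos (α := ℝ).1 (hY.trans_lt' (by linarith))))
    ((filter_subset _ _).trans sdiff_subset) ((filter_subset _ _).trans sdiff_subset)
    (fun x hx => (mem_filter.1 hx).2.2) (fun y hy => (mem_filter.1 hy).2.2)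
  have hXten := Nat.cast_le (α := ℝ) (m := 10).1 (hXuv.trans' (by push_cast; linarith))
  have hYten := Nat.cast_le (α := ℝ) (m := 10).1 (hYuv.trans' (by push_cast; linarith))
  have hdistinct : p ≠ q ∧ u ≠ v ∧ t ≠ s := by
    obtain ⟨x, hx⟩ := card_pos.1 (hXten.trans_lt' (by lia))
    obtain ⟨y, hy⟩ := card_pos.1 (hYten.trans_lt' (by lia))
    simp only [mem_filter, mem_anchors_iff] at hx hy
    exact ⟨hx.1.2.1.2.2.ne_right hH, hx.2.2.ne_right hH, hy.1.2.1.2.2.ne_right hH⟩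
  simp only [mem_sdiff, mem_union, mem_insert, mem_singleton, not_or] at hp hq hs ht hu hv
  refine ⟨p, q, u, v, s, t, ?_, ?_, hXten.trans (card_le_card fun x hx => ?_),
    hYten.trans (card_le_card fun y hy => ?_)⟩
  · simp only [List.nodup_cons, List.mem_cons, List.not_mem_nil, List.nodup_nil]
    grind only
  · simp only [List.forall_mem_cons, mem_sdiff]
    tauto
  · simp only [mem_filter, mem_anchors_iff] at hx
    obtain ⟨⟨hxR, ⟨habx, hbxp, hxpq⟩, -⟩, hxqu, hxuv⟩ := hx
    exact mem_filter.2 ⟨hxR, ⟨habx, hbxp, hxpq, trivial⟩,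
      hxpq.rotate, hxqu.swap_left, hxuv, trivial⟩
  · simp only [mem_filter, mem_anchors_iff, mem_sdiff, mem_union, not_or] at hy
    obtain ⟨⟨⟨hyR, hyF, -⟩, ⟨hcdy, hdyt, hyts⟩, -⟩, hysv, hyuv⟩ := hy
    exact mem_filter.2 ⟨mem_sdiff.2 ⟨hyR, hyF⟩,
      ⟨hyuv.rotate, hysv.rotate.rotate, hyts.swap_right, trivial⟩,
      hyts.reverse, hdyt.reverse, hcdy.reverse, trivial⟩

lemma exists_tightChain_ten (hR : IsReservoir H L R) (hH : ∀ e ∈ H, #e = 3)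
    (hRcard : 10 ^ 8 ≤ #R) (hF : (#F : ℝ) + 4 ≤ 0.0001 * #R) (hab : L a b) (hcd : L c d) :
    ∃ w : List V, w.length = 10 ∧ w.Nodup ∧ (∀ x ∈ w, x ∈ R \ F) ∧
      TightChain H (a :: b :: (w ++ [d, c])) := by
  obtain ⟨p, q, u, v, s, t, hnodup, hmem, hX, hY⟩ :=
    hR.exists_anchored_bridge hH hRcard hF hab hcd
  obtain ⟨x₁, hx₁, x₂, hx₂, hx₁new, hx₂new, hx⟩ :=
    exists_ne_of_length_add_one_lt_card [p, q, u, v, s, t] (hX.trans_lt' (by simp))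
  obtain ⟨y₁, hy₁, y₂, hy₂, hy₁new, hy₂new, hy⟩ :=
    exists_ne_of_length_add_one_lt_card [x₁, x₂, p, q, u, v, s, t] (hY.trans_lt' (by simp))
  obtain ⟨hx₁R, ⟨habx, hbxp, hxpq, -⟩, -⟩ := mem_filter.1 hx₁
  obtain ⟨hx₂R, -, hpqx, hqxu, hxuv, -⟩ := mem_filter.1 hx₂
  obtain ⟨hy₁R, ⟨huvy, hvys, hyst, -⟩, -⟩ := mem_filter.1 hy₁
  obtain ⟨hy₂R, -, hsty, htyd, hydc, -⟩ := mem_filter.1 hy₂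
  refine ⟨[x₁, p, q, x₂, u, v, y₁, s, t, y₂], rfl, ?_, ?_, habx, hbxp, hxpq, hpqx, hqxu, hxuv,
    huvy, hvys, hyst, hsty, htyd, hydc, trivial⟩
  · simp only [List.nodup_cons, List.mem_cons, List.not_mem_nil, List.nodup_nil]
      at hnodup hx₁new hx₂new hy₁new hy₂new ⊢
    grind only
  · simp only [List.forall_mem_cons] at hmem ⊢
    tauto

lemma exists_tightChain (hR : IsReservoir H L R) (hH : ∀ e ∈ H, #e = 3) (hRcard : 10 ^ 8 ≤ #R)
    (hcd : L c d) (k : ℕ) (hF : (#F : ℝ) + k + 4 ≤ 0.0001 * #R) (hab : L a b) :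
    ∃ w : List V, w.length = k + 10 ∧ w.Nodup ∧ (∀ x ∈ w, x ∈ R \ F) ∧
      TightChain H (a :: b :: (w ++ [d, c])) := by
  induction k generalizing a b F with
  | zero => simpa using hR.exists_tightChain_ten hH hRcard (by simpa using hF) hab hcd
  | succ k ih =>
    push_cast at hF
    have hRlarge : (10 ^ 8 : ℝ) ≤ #R := mod_cast hRcard
    have hext := hR.card_extensions_ge (F := F) (by linarith) hab
    obtain ⟨x, hx⟩ := card_pos.1 (Nat.cast_pos (α := ℝ).1 (hext.trans_lt' (by linarith)))
    obtain ⟨hxRF, habx, hbx⟩ := mem_filter.1 hx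
    have hinsert : (#(insert x F) : ℝ) ≤ #F + 1 := mod_cast card_insert_le x F
    obtain ⟨w, hlen, hnodup, hwR, hchain⟩ := ih (F := insert x F) (by linarith) hbx
    refine ⟨x :: w, by simp [hlen], ?_, ?_, habx, hchain⟩
    · exact List.nodup_cons.2 ⟨fun hxw => by simpa using hwR x hxw, hnodup⟩
    · exact List.forall_mem_cons.2 ⟨hxRF, fun y hy => by
        have := hwR y hy
        grind⟩

end IsReservoir

end Reservoir

section Connecting

variable {ι V : Type*} {R : Finset V} {a b c d : ι → V}

lemma exists_eq_endpoint_or_mem {w : List V} {i : ι} {x : V}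
    (hx : x ∈ a i :: b i :: (w ++ [d i, c i])) : (∃ k, x = ![a, b, c, d] k i) ∨ x ∈ w := by
  obtain rfl | rfl | hx | rfl | rfl : x = a i ∨ x = b i ∨ x ∈ w ∨ x = d i ∨ x = c i := by
    simpa using hx
  exacts [.inl ⟨0, rfl⟩, .inl ⟨1, rfl⟩, .inr hx, .inl ⟨3, rfl⟩, .inl ⟨2, rfl⟩]

lemma nodup_endpoints (hinj : Function.Injective fun x : ι × Fin 4 => ![a, b, c, d] x.2 x.1)
    (i : ι) : [a i, b i, c i, d i].Nodup := by
  have hinj_i : Function.Injective fun k : Fin 4 => ![a, b, c, d] k i :=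
    hinj.comp (Prod.mk_right_injective i)
  simpa [List.ofFn_succ] using List.nodup_ofFn.2 hinj_i

lemma nodup_with_endpoints (hinj : Function.Injective fun x : ι × Fin 4 => ![a, b, c, d] x.2 x.1)
    (hout : ∀ i, a i ∉ R ∧ b i ∉ R ∧ c i ∉ R ∧ d i ∉ R) (i : ι) {w : List V} (hw : w.Nodup)
    (hwR : ∀ x ∈ w, x ∈ R) : (a i :: b i :: (w ++ [d i, c i])).Nodup := by
  have hends := nodup_endpoints hinj i
  simp only [List.nodup_cons, List.mem_cons, List.nodup_append, List.mem_append, List.not_mem_nil,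
    or_false] at hends ⊢
  grind only

lemma disjoint_with_endpoints
    (hinj : Function.Injective fun x : ι × Fin 4 => ![a, b, c, d] x.2 x.1)
    (hout : ∀ i, a i ∉ R ∧ b i ∉ R ∧ c i ∉ R ∧ d i ∉ R) {w : ι → List V}
    (hwR : ∀ i, ∀ x ∈ w i, x ∈ R) {i j : ι} (hij : i ≠ j) (hw : (w i).Disjoint (w j)) :
    (a i :: b i :: (w i ++ [d i, c i])).Disjoint (a j :: b j :: (w j ++ [d j, c j])) := by
  have hend (k : Fin 4) (i : ι) : ![a, b, c, d] k i ∉ R := by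
    fin_cases k <;> simp [hout i]
  intro x hxi hxj
  obtain ⟨k, rfl⟩ | hxi := exists_eq_endpoint_or_mem hxi
  · obtain ⟨l, hkl⟩ | hxj := exists_eq_endpoint_or_mem hxj
    · exact hij (congrArg Prod.fst (hinj (a₁ := (i, k)) (a₂ := (j, l)) hkl))
    · exact hend k i (hwR j _ hxj)
  · obtain ⟨l, rfl⟩ | hxj := exists_eq_endpoint_or_mem hxj
    · exact hend l j (hwR i _ hxi)
    · exact hw hxi hxj

end Connecting

lemma TightChain.isTightPath {V : Type} [DecidableEq V] {H : Finset (Finset V)} {l : List V}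
    {t : ℕ} (h : TightChain H l) (hnodup : l.Nodup) (hlen : l.length = t) :
    IsTightPath H fun k : Fin t => l.get (k.cast hlen.symm) := by
  subst hlen
  exact ⟨List.nodup_iff_injective_get.1 hnodup, fun i hi => h.isEdge_getElem i hi⟩

theorem IsReservoir.exists_disjoint_tightPaths {V : Type} [DecidableEq V] {H : Finset (Finset V)}
    {L : V → V → Prop} {R : Finset V} (hR : IsReservoir H L R) (hH : ∀ e ∈ H, #e = 3)
    (hRcard : 10 ^ 8 ≤ #R) {ι : Type*} [Fintype ι]
    (hι : 14 * (Fintype.card ι : ℝ) + 8 ≤ 0.0001 * #R) (a b c d : ι → V)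
    (hinj : Function.Injective fun x : ι × Fin 4 => ![a, b, c, d] x.2 x.1)
    (hout : ∀ i, a i ∉ R ∧ b i ∉ R ∧ c i ∉ R ∧ d i ∉ R)
    (hab : ∀ i, L (a i) (b i)) (hcd : ∀ i, L (c i) (d i)) :
    ∃ Pa : ι → Fin 18 → V,
      (∀ i, IsTightPath H (Pa i)) ∧
      (∀ i, Pa i 0 = a i ∧ Pa i 1 = b i ∧ Pa i 17 = c i ∧ Pa i 16 = d i) ∧
      (∀ i, ∀ k : Fin 18, 2 ≤ (k : ℕ) → (k : ℕ) ≤ 15 → Pa i k ∈ R) ∧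
      (∀ i j, i ≠ j → ∀ k l : Fin 18, Pa i k ≠ Pa j l) := by
  obtain ⟨w, hw, hdisj⟩ := exists_pairwise_disjoint_of_forall_exists_avoiding (N := 14)
    (P := fun i w => w.length = 14 ∧ w.Nodup ∧ (∀ x ∈ w, x ∈ R) ∧
      TightChain H (a i :: b i :: (w ++ [d i, c i]))) fun i F hF => by
    have hFR : (#F : ℝ) + (4 : ℕ) + 4 ≤ 0.0001 * #R := by
      have : (#F : ℝ) ≤ 14 * Fintype.card ι := mod_cast hF
      push_cast
      linarith
    obtain ⟨w, hlen, hnodup, hwRF, hchain⟩ := hR.exists_tightChain hH hRcard (hcd i) 4 hFR (hab i)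
    exact ⟨w, ⟨hlen, hnodup, fun x hx => (mem_sdiff.1 (hwRF x hx)).1, hchain⟩, hlen.le,
      fun x hx => (mem_sdiff.1 (hwRF x hx)).2⟩
  choose hlen hnodup hwR hchain using hw
  have hlen' (i : ι) : (a i :: b i :: (w i ++ [d i, c i])).length = 18 := by simp [hlen]
  refine ⟨fun i k => (a i :: b i :: (w i ++ [d i, c i])).get (k.cast (hlen' i).symm), fun i => ?_,
    fun i => ?_, fun i k hk hk' => ?_, fun i j hij k l => ?_⟩
  · exact (hchain i).isTightPath (nodup_with_endpoints hinj hout i (hnodup i) (hwR i)) (hlen' i)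
  · simp [hlen]
  · obtain ⟨k, hk18⟩ := k
    obtain ⟨k, rfl⟩ := Nat.exists_eq_add_of_le' hk
    have hkw : k < (w i).length := by grind
    simpa [List.getElem_append_left hkw] using hwR i _ (List.getElem_mem hkw)
  · exact List.disjoint_iff_ne.1 (disjoint_with_endpoints hinj hout hwR hij (hdisj hij))
      _ (List.get_mem _ _) _ (List.get_mem _ _)

lemma exists_forall_le_reservoir_size {γ : ℝ} (hγ0 : 0 < γ) (hγ1 : γ ≤ 1 / 3000000) :
    ∃ n₀ : ℕ, ∀ n : ℕ, n₀ ≤ n → ∀ r m : ℝ, γ ^ 2 * n / 4 ≤ r → m ≤ γ ^ 3 * n + 1 →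
      10 ^ 8 ≤ r ∧ 14 * m + 8 ≤ 0.0001 * r := by
  refine ⟨⌈4 * 10 ^ 8 / γ ^ 2⌉₊, fun n hn r m hr hm => ?_⟩
  have hlarge : 4 * 10 ^ 8 ≤ γ ^ 2 * n :=
    (div_le_iff₀' (by positivity)).1 ((Nat.le_ceil _).trans (mod_cast hn))
  have hcube : γ ^ 3 * n ≤ γ ^ 2 * n / 3000000 := calc
    γ ^ 3 * n = γ * (γ ^ 2 * n) := by ring
    _ ≤ 1 / 3000000 * (γ ^ 2 * n) := by gcongr
    _ = γ ^ 2 * n / 3000000 := by ring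
  constructor <;> linarith

theorem stmt_19_general (γ : ℝ) (hγ0 : 0 < γ) (hγ1 : γ ≤ 1 / 3000000) :
    ∃ n₀ : ℕ, ∀ n : ℕ, n₀ ≤ n →
    ∀ (V : Type) [DecidableEq V] [Fintype V], Fintype.card V = n →
    ∀ H : Finset (Finset V), (∀ e ∈ H, e.card = 3) →
    ∀ R : Finset V,
      γ ^ 2 * n / 4 ≤ (R.card : ℝ) →
      (∀ u v : V, u ≠ v → (1 / 3 : ℝ) * ((n : ℝ) - 2) ≤ (coDeg H u v : ℝ) →
        (0.333 : ℝ) * (R.card : ℝ) ≤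
          ((R.filter fun w => ({u, v, w} : Finset V) ∈ H).card : ℝ)) →
      (∀ v : V, (0.697 : ℝ) * (R.card : ℝ) ≤
        ((R.filter fun w =>
          w ≠ v ∧ (1 / 3 : ℝ) * ((n : ℝ) - 2) ≤ (coDeg H v w : ℝ)).card : ℝ)) →
      (∀ v ∈ R, (0.7994 : ℝ) * (R.card.choose 2 : ℝ) ≤
        (((H.filter fun e => e ⊆ R).filter fun e => v ∈ e).card : ℝ)) →
      ∀ m : ℕ, (m : ℝ) ≤ γ ^ 3 * n + 1 →
      ∀ a b c d : Fin m → V,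
        Function.Injective (fun x : Fin m × Fin 4 => ![a, b, c, d] x.2 x.1) →
        (∀ i, a i ∉ R ∧ b i ∉ R ∧ c i ∉ R ∧ d i ∉ R) →
        (∀ i, (1 / 3 : ℝ) * ((n : ℝ) - 2) ≤ (coDeg H (a i) (b i) : ℝ)) →
        (∀ i, (1 / 3 : ℝ) * ((n : ℝ) - 2) ≤ (coDeg H (c i) (d i) : ℝ)) →
        ∃ Pa : Fin m → Fin 18 → V,
          (∀ i, IsTightPath H (Pa i)) ∧
          (∀ i, Pa i 0 = a i ∧ Pa i 1 = b i ∧ Pa i 17 = c i ∧ Pa i 16 = d i) ∧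
          (∀ i, ∀ k : Fin 18, 2 ≤ (k : ℕ) → (k : ℕ) ≤ 15 → Pa i k ∈ R) ∧
          (∀ i j, i ≠ j → ∀ k l : Fin 18, Pa i k ≠ Pa j l) := by
  obtain ⟨n₀, hn₀⟩ := exists_forall_le_reservoir_size hγ0 hγ1
  refine ⟨n₀, fun n hn V _ _ _ H hH R hRcard hcodeg hlarge hdeg m hm a b c d hinj hout hab hcd =>
    ?_⟩
  have hR : IsReservoir H (fun u v => v ≠ u ∧ (1 / 3 : ℝ) * ((n : ℝ) - 2) ≤ coDeg H u v) R :=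
    ⟨fun u v huv => hcodeg u v huv.1.symm huv.2, fun v => by convert hlarge v, hdeg⟩
  obtain ⟨hsize, hm'⟩ := hn₀ n hn #R m hRcard hm
  have hends (i : Fin m) : b i ≠ a i ∧ d i ≠ c i := by
    have := nodup_endpoints hinj i
    grind
  exact hR.exists_disjoint_tightPaths hH (mod_cast hsize) (by simpa using hm') a b c d hinj hout
    (fun i => ⟨(hends i).1, hab i⟩) fun i => ⟨(hends i).2, hcd i⟩

/-- For `0 < γ ≤ 10⁻⁶/3` and large `n`: if `H` is a 3-graph on `n` vertices with minimum
vertex degree at least `0.8·C(n-1,2)` and `R` is a reservoir set satisfying (a)-(c) of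
Claim 10, then any `m ≤ γ³n + 1` pairwise disjoint `(1/3)`-large ordered pairs
`e_1,…,e_m` and `f_1,…,f_m` outside `R` can be simultaneously connected by pairwise
vertex-disjoint tight paths of length 16 with all inner vertices in `R`. -/
theorem stmt_19 (γ : ℝ) (hγ0 : 0 < γ) (hγ1 : γ ≤ 1 / 3000000) :
    ∃ n₀ : ℕ, ∀ n : ℕ, n₀ ≤ n →
    ∀ (V : Type) [DecidableEq V] [Fintype V], Fintype.card V = n →
    ∀ H : Finset (Finset V), (∀ e ∈ H, e.card = 3) →
    (∀ v : V, (0.8 : ℝ) * ((n - 1).choose 2 : ℝ) ≤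
      ((H.filter fun e => v ∈ e).card : ℝ)) →
    ∀ R : Finset V,
      (γ ^ 2 * n / 4 ≤ (R.card : ℝ) ∧ (R.card : ℝ) ≤ γ ^ 2 * n / 2) →
      (∀ u v : V, u ≠ v → (1 / 3 : ℝ) * ((n : ℝ) - 2) ≤ (coDeg H u v : ℝ) →
        (0.333 : ℝ) * (R.card : ℝ) ≤
          ((R.filter fun w => ({u, v, w} : Finset V) ∈ H).card : ℝ)) →
      (∀ v : V, (0.697 : ℝ) * (R.card : ℝ) ≤
        ((R.filter fun w =>
          w ≠ v ∧ (1 / 3 : ℝ) * ((n : ℝ) - 2) ≤ (coDeg H v w : ℝ)).card : ℝ)) →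
      (∀ v ∈ R, (0.7994 : ℝ) * (R.card.choose 2 : ℝ) ≤
        (((H.filter fun e => e ⊆ R).filter fun e => v ∈ e).card : ℝ)) →
      ∀ m : ℕ, (m : ℝ) ≤ γ ^ 3 * n + 1 →
      ∀ a b c d : Fin m → V,
        Function.Injective (fun x : Fin m × Fin 4 => ![a, b, c, d] x.2 x.1) →
        (∀ i, a i ∉ R ∧ b i ∉ R ∧ c i ∉ R ∧ d i ∉ R) →
        (∀ i, (1 / 3 : ℝ) * ((n : ℝ) - 2) ≤ (coDeg H (a i) (b i) : ℝ)) →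
        (∀ i, (1 / 3 : ℝ) * ((n : ℝ) - 2) ≤ (coDeg H (c i) (d i) : ℝ)) →
        ∃ Pa : Fin m → Fin 18 → V,
          (∀ i, IsTightPath H (Pa i)) ∧
          (∀ i, Pa i 0 = a i ∧ Pa i 1 = b i ∧ Pa i 17 = c i ∧ Pa i 16 = d i) ∧
          (∀ i, ∀ k : Fin 18, 2 ≤ (k : ℕ) → (k : ℕ) ≤ 15 → Pa i k ∈ R) ∧
          (∀ i j, i ≠ j → ∀ k l : Fin 18, Pa i k ≠ Pa j l) := by
  obtain ⟨n₀, hn₀⟩ := stmt_19_general γ hγ0 hγ1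
  exact ⟨n₀, fun n hn V _ _ hV H hH _ R hRcard => hn₀ n hn V hV H hH R hRcard.1⟩
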